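/- arXiv:2401.16439 — 6 statements merged into one kernel-verified Lean document; each statement's English description precedes it below -/
import Mathlib

section
/- Let D be a probability measure on ℝ^d, and let c, g : ℝ^d → {−1,+1} be measurable with P_{x∼D}{g(x)=1} > 0. Then 2·P{g(x)=1}·d_D(c,g) = P{c(x)=−1}·P{g(x)=−1} + P{c(x)=1}·P{g(x)=1} − P{c(x)=g(x)}. -/
open MeasureTheory

/-- Statistical parity deviation `d_D(c,g) = P{c=1} − P{c=1 | g=1}`. -/
noncomputable def dev {d : ℕ} (D : Measure (EuclideanSpace ℝ (Fin d)))
    (c g : EuclideanSpace ℝ (Fin d) → ℝ) : ℝ :=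
  (D {x | c x = 1}).toReal -
    (D {x | c x = 1 ∧ g x = 1}).toReal / (D {x | g x = 1}).toReal

/-- Lemma 3.3: `2·P{g=1}·d_D(c,g) = P{c=−1}·P{g=−1} + P{c=1}·P{g=1} − P{c=g}`. -/
theorem stmt_0 {d : ℕ} (D : Measure (EuclideanSpace ℝ (Fin d))) [IsProbabilityMeasure D]
    (c g : EuclideanSpace ℝ (Fin d) → ℝ) (hc : Measurable c) (hg : Measurable g)
    (hcval : ∀ x, c x = 1 ∨ c x = -1) (hgval : ∀ x, g x = 1 ∨ g x = -1)
    (hgpos : 0 < D {x | g x = 1}) :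
    2 * (D {x | g x = 1}).toReal * dev D c g =
      (D {x | c x = -1}).toReal * (D {x | g x = -1}).toReal +
        (D {x | c x = 1}).toReal * (D {x | g x = 1}).toReal -
        (D {x | c x = g x}).toReal := by
  have mC : MeasurableSet {x | c x = 1} := hc (measurableSet_singleton 1)
  have mG : MeasurableSet {x | g x = 1} := hg (measurableSet_singleton 1)
  have eC : {x | c x = -1} = {x | c x = 1}ᶜ := by
    ext x
    simp only [Set.mem_setOf_eq, Set.mem_compl_iff]
    rcases hcval x with h | h <;> rw [h] <;> norm_num
  have eG : {x | g x = -1} = {x | g x = 1}ᶜ := by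
    ext x
    simp only [Set.mem_setOf_eq, Set.mem_compl_iff]
    rcases hgval x with h | h <;> rw [h] <;> norm_num
  have eB : {x | c x = 1 ∧ g x = 1} = {x | c x = 1} ∩ {x | g x = 1} := rfl
  have eE : {x | c x = g x} = ({x | c x = 1} ∩ {x | g x = 1}) ∪
      ({x | c x = 1} ∪ {x | g x = 1})ᶜ := by
    ext x
    simp only [Set.mem_setOf_eq, Set.mem_compl_iff, Set.mem_union, Set.mem_inter_iff]
    rcases hcval x with h | h <;> rcases hgval x with h2 | h2 <;> rw [h, h2] <;> norm_num
  have hq : (D {x | g x = 1}).toReal ≠ 0 :=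
    (ENNReal.toReal_pos hgpos.ne' (measure_ne_top D _)).ne'
  unfold dev
  rw [eC, eG, eB, eE]
  generalize {x | c x = 1} = A at *
  generalize {x | g x = 1} = B at *
  simp only [← measureReal_def] at *
  have hd : Disjoint (A ∩ B) (A ∪ B)ᶜ :=
    Set.disjoint_left.mpr fun x hx hx2 => hx2 (Or.inl hx.1)
  rw [measureReal_union hd (mC.union mG).compl, probReal_compl_eq_one_sub mC,
    probReal_compl_eq_one_sub mG, probReal_compl_eq_one_sub (mC.union mG)]
  have h := measureReal_union_add_inter (μ := D) (s := A) mG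
  have h2 : D.real B * (D.real (A ∩ B) / D.real B) = D.real (A ∩ B) := by
    field_simp
  linear_combination (-2) * h2 - h
end

section
/- Let D be a probability measure on ℝ^d, let c : ℝ^d → {−1,+1} be measurable, and let g, g' : ℝ^d → {−1,+1} be measurable subgroup indicators with P{g(x)=1} > 0 and P{g'(x)=1} > 0. Then | P{g(x)=1}·|d_D(c,g)| − P{g'(x)=1}·|d_D(c,g')| | ≤ |P{g(x)=1} − P{g'(x)=1}| + |P{c(x)=1 ∧ g(x)=1} − P{c(x)=1 ∧ g'(x)=1}| ≤ 2·P_{x∼D}{g(x) ≠ g'(x)}. -/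
open MeasureTheory

/-- Inequality (3.3): the weighted unfairness is 2-Lipschitz in the subgroup
indicator with respect to disagreement probability. -/
theorem stmt_2 {d : ℕ} (D : Measure (EuclideanSpace ℝ (Fin d))) [IsProbabilityMeasure D]
    (c g g' : EuclideanSpace ℝ (Fin d) → ℝ)
    (hc : Measurable c) (hg : Measurable g) (hg' : Measurable g')
    (hcval : ∀ x, c x = 1 ∨ c x = -1)
    (hgval : ∀ x, g x = 1 ∨ g x = -1) (hg'val : ∀ x, g' x = 1 ∨ g' x = -1)
    (hgpos : 0 < D {x | g x = 1}) (hg'pos : 0 < D {x | g' x = 1}) :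
    |(D {x | g x = 1}).toReal * (abs (dev D c g)) -
        (D {x | g' x = 1}).toReal * (abs (dev D c g'))| ≤
      |(D {x | g x = 1}).toReal - (D {x | g' x = 1}).toReal| +
        |(D {x | c x = 1 ∧ g x = 1}).toReal - (D {x | c x = 1 ∧ g' x = 1}).toReal| ∧
    |(D {x | g x = 1}).toReal - (D {x | g' x = 1}).toReal| +
        |(D {x | c x = 1 ∧ g x = 1}).toReal - (D {x | c x = 1 ∧ g' x = 1}).toReal| ≤
      2 * (D {x | g x ≠ g' x}).toReal := by
  have key : ∀ A B N : Set (EuclideanSpace ℝ (Fin d)), A ⊆ B ∪ N → B ⊆ A ∪ N →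
      |(D A).toReal - (D B).toReal| ≤ (D N).toReal := by
    intro A B N h1 h2
    have e1 : D.real A ≤ D.real B + D.real N :=
      (measureReal_mono h1).trans (measureReal_union_le B N)
    have e2 : D.real B ≤ D.real A + D.real N :=
      (measureReal_mono h2).trans (measureReal_union_le A N)
    simp only [Measure.real] at e1 e2
    rw [abs_le]
    constructor <;> linarith
  have p1 : 0 < (D {x | g x = 1}).toReal := ENNReal.toReal_pos hgpos.ne' (measure_ne_top _ _)
  have p2 : 0 < (D {x | g' x = 1}).toReal := ENNReal.toReal_pos hg'pos.ne' (measure_ne_top _ _)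
  have q1 : (D {x | c x = 1}).toReal ≤ 1 := measureReal_le_one
  have q0 : 0 ≤ (D {x | c x = 1}).toReal := ENNReal.toReal_nonneg
  constructor
  · have r1 : (D {x | g x = 1}).toReal * |dev D c g| =
        |(D {x | g x = 1}).toReal * (D {x | c x = 1}).toReal -
          (D {x | c x = 1 ∧ g x = 1}).toReal| := by
      rw [← abs_of_pos p1, ← abs_mul, abs_of_pos p1, dev, mul_sub, mul_div_cancel₀ _ p1.ne']
    have r2 : (D {x | g' x = 1}).toReal * |dev D c g'| =
        |(D {x | g' x = 1}).toReal * (D {x | c x = 1}).toReal -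
          (D {x | c x = 1 ∧ g' x = 1}).toReal| := by
      rw [← abs_of_pos p2, ← abs_mul, abs_of_pos p2, dev, mul_sub, mul_div_cancel₀ _ p2.ne']
    rw [r1, r2]
    generalize (D {x | g x = 1}).toReal = a at *
    generalize (D {x | g' x = 1}).toReal = b at *
    generalize (D {x | c x = 1}).toReal = p at *
    generalize (D {x | c x = 1 ∧ g x = 1}).toReal = u at *
    generalize (D {x | c x = 1 ∧ g' x = 1}).toReal = v at *
    calc |(|a * p - u| - |b * p - v|)| ≤ |(a * p - u) - (b * p - v)| := abs_abs_sub_abs_le _ _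
      _ = |(a - b) * p - (u - v)| := by congr 1; ring
      _ ≤ |(a - b) * p| + |u - v| := abs_sub _ _
      _ ≤ |a - b| + |u - v| := by
        rw [abs_mul, abs_of_nonneg q0]
        have := mul_le_mul_of_nonneg_left q1 (abs_nonneg (a - b))
        linarith
  · have k1 := key {x | g x = 1} {x | g' x = 1} {x | g x ≠ g' x}
      (by intro x; simp only [Set.mem_union, Set.mem_setOf_eq]; grind)
      (by intro x; simp only [Set.mem_union, Set.mem_setOf_eq]; grind)
    have k2 := key {x | c x = 1 ∧ g x = 1} {x | c x = 1 ∧ g' x = 1} {x | g x ≠ g' x}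
      (by intro x; simp only [Set.mem_union, Set.mem_setOf_eq]; grind)
      (by intro x; simp only [Set.mem_union, Set.mem_setOf_eq]; grind)
    linarith
end

section
/- Let D be a probability measure on ℝ^d whose one-dimensional marginals have continuous cumulative distribution functions (for every nonzero u ∈ ℝ^d, t ↦ P_{x∼D}{⟨u,x⟩ ≤ t} is continuous), let c : ℝ^d → {−1,+1} be measurable, let 0 < a ≤ b < 1, and let n be a positive integer. Suppose h* is a halfspace with a ≤ P{h*(x)=1} ≤ b maximizing P{h(x)=1}·|d_D(c,h)| over all halfspaces h with a ≤ P{h(x)=1} ≤ b, and set γ* = P{h*(x)=1}·|d_D(c,h*)|. Suppose also that for each k ∈ {0,…,n}, h_k* is a halfspace maximizing P{h(x)=1}·|d_D(c,h)| over all halfspaces h with P{h(x)=1} = a + k(b−a)/n. Then max_{0≤k≤n} P{h_k*(x)=1}·|d_D(c,h_k*)| ≥ γ* − 2(b−a)/n. -/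
open MeasureTheory
open scoped RealInnerProductSpace

/-- The halfspace `x ↦ +1` if `⟨w,x⟩ ≥ t`, `−1` otherwise. -/
noncomputable def halfspace {d : ℕ} (w : EuclideanSpace ℝ (Fin d)) (t : ℝ) :
    EuclideanSpace ℝ (Fin d) → ℝ :=
  fun x => if t ≤ ⟪w, x⟫ then 1 else -1

/-- Weighted unfairness `P{h=1}·|d_D(c,h)|`. -/
noncomputable def unf {d : ℕ} (D : Measure (EuclideanSpace ℝ (Fin d)))
    (c h : EuclideanSpace ℝ (Fin d) → ℝ) : ℝ :=
  (D {x | h x = 1}).toReal * |dev D c h|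

lemma aux_hs {d : ℕ} (w : EuclideanSpace ℝ (Fin d)) (t : ℝ) (x : EuclideanSpace ℝ (Fin d)) :
    halfspace w t x = 1 ↔ t ≤ ⟪w, x⟫ := by
  unfold halfspace
  split_ifs with h
  · simp [h]
  · simp only [h, iff_false]; norm_num

lemma aux_meas {d : ℕ} (w : EuclideanSpace ℝ (Fin d)) :
    Measurable (fun x : EuclideanSpace ℝ (Fin d) => ⟪w, x⟫) :=
  (continuous_const.inner continuous_id).measurable

lemma aux_G {d : ℕ} (D : Measure (EuclideanSpace ℝ (Fin d))) [IsProbabilityMeasure D]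
    (w : EuclideanSpace ℝ (Fin d))
    (hF : Continuous fun t : ℝ => (D {x | ⟪w, x⟫ ≤ t}).toReal) (t : ℝ) :
    (D {x | t ≤ ⟪w, x⟫}).toReal = 1 - (D {x | ⟪w, x⟫ ≤ t}).toReal := by
  have hm := aux_meas w
  have key : ∀ s, D.real {x | s < ⟪w, x⟫} = 1 - D.real {x | ⟪w, x⟫ ≤ s} := by
    intro s
    rw [← probReal_compl_eq_one_sub (measurableSet_le hm measurable_const)]
    congr 1; ext x; simp
  apply le_antisymm
  · have hT : Filter.Tendsto (fun s : ℝ => 1 - (D {x | ⟪w, x⟫ ≤ s}).toReal)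
        (nhdsWithin t (Set.Iio t)) (nhds (1 - (D {x | ⟪w, x⟫ ≤ t}).toReal)) :=
      ((continuous_const.sub hF).tendsto t).mono_left nhdsWithin_le_nhds
    refine ge_of_tendsto hT ?_
    filter_upwards [self_mem_nhdsWithin] with s hs
    have := key s
    simp only [Measure.real] at this
    rw [← this]
    exact measureReal_mono (μ := D) (fun x hx => show s < ⟪w, x⟫ from lt_of_lt_of_le hs hx)
  · have := key t
    simp only [Measure.real] at this
    rw [← this]
    exact measureReal_mono (μ := D) (fun x hx => show t ≤ ⟪w, x⟫ from le_of_lt hx)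

lemma aux_exists {d : ℕ} (D : Measure (EuclideanSpace ℝ (Fin d))) [IsProbabilityMeasure D]
    (w : EuclideanSpace ℝ (Fin d))
    (hF : Continuous fun t : ℝ => (D {x | ⟪w, x⟫ ≤ t}).toReal) (t m : ℝ) (hm0 : 0 < m)
    (hm : m ≤ (D {x | t ≤ ⟪w, x⟫}).toReal) :
    ∃ s, t ≤ s ∧ (D {x | s ≤ ⟪w, x⟫}).toReal = m := by
  have hmeas := aux_meas w
  have : IsProbabilityMeasure (D.map (fun x => ⟪w, x⟫)) :=
    Measure.isProbabilityMeasure_map hmeas.aemeasurable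
  have hlim := ProbabilityTheory.tendsto_cdf_atTop (D.map (fun x => ⟪w, x⟫))
  have hcdf : ∀ s, ProbabilityTheory.cdf (D.map (fun x => ⟪w, x⟫)) s
      = (D {x | ⟪w, x⟫ ≤ s}).toReal := by
    intro s
    rw [ProbabilityTheory.cdf_eq_real, Measure.real, Measure.map_apply hmeas measurableSet_Iic]
    rfl
  obtain ⟨T, hT, hTt⟩ := ((hlim.eventually (lt_mem_nhds (by linarith : 1 - m < 1))).and
    (Filter.eventually_ge_atTop t)).exists
  rw [hcdf] at hT
  rw [aux_G D w hF] at hm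
  obtain ⟨s, hs, hs'⟩ := intermediate_value_Icc hTt hF.continuousOn
    (show 1 - m ∈ Set.Icc _ _ from ⟨by linarith, hT.le⟩)
  refine ⟨s, hs.1, ?_⟩
  rw [aux_G D w hF]
  simp only at hs'
  linarith

lemma aux_unf {d : ℕ} (D : Measure (EuclideanSpace ℝ (Fin d)))
    (c h : EuclideanSpace ℝ (Fin d) → ℝ) (hp : 0 < (D {x | h x = 1}).toReal) :
    unf D c h = |(D {x | h x = 1}).toReal * (D {x | c x = 1}).toReal
      - (D {x | c x = 1 ∧ h x = 1}).toReal| := by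
  unfold unf dev
  rw [← abs_of_pos hp, ← abs_mul, abs_of_pos hp]
  congr 1
  field_simp

lemma aux_grid (a b m : ℝ) (n : ℕ) (hn : 0 < n) (h1 : a ≤ m) (h2 : m ≤ b) :
    ∃ k ≤ n, a + (k : ℝ) * (b - a) / n ≤ m ∧ m ≤ a + (k : ℝ) * (b - a) / n + (b - a) / n := by
  have hn' : (0 : ℝ) < n := by exact_mod_cast hn
  rcases (h1.trans h2).eq_or_lt with h | h
  · subst h
    exact ⟨0, Nat.zero_le _, by simpa using h1, by simpa using h2⟩
  · have hd : 0 < b - a := by linarith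
    have hnn : 0 ≤ (m - a) * n / (b - a) := by
      have : 0 ≤ m - a := by linarith
      positivity
    refine ⟨⌊(m - a) * n / (b - a)⌋₊, ?_, ?_, ?_⟩
    · apply Nat.floor_le_of_le
      rw [div_le_iff₀ hd]
      nlinarith
    · have := Nat.floor_le hnn
      rw [le_div_iff₀ hd] at this
      have : (⌊(m - a) * n / (b - a)⌋₊ : ℝ) * (b - a) / n ≤ m - a := by
        rwa [div_le_iff₀ hn']
      linarith
    · have := Nat.lt_floor_add_one ((m - a) * n / (b - a))
      rw [div_lt_iff₀ hd] at this
      have : m - a ≤ ((⌊(m - a) * n / (b - a)⌋₊ : ℝ) + 1) * (b - a) / n := by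
        rw [le_div_iff₀ hn']; exact this.le
      rw [add_mul, add_div, one_mul] at this
      linarith

/-- Proposition 3.2: maximizing weighted unfairness over halfspaces whose mass is
constrained to a grid of `n+1` values loses at most `2(b−a)/n` relative to the
optimum over all halfspaces of mass between `a` and `b`. -/
theorem stmt_3 {d : ℕ} (D : Measure (EuclideanSpace ℝ (Fin d))) [IsProbabilityMeasure D]
    (hcont : ∀ u : EuclideanSpace ℝ (Fin d), u ≠ 0 →
      Continuous fun t : ℝ => (D {x | ⟪u, x⟫ ≤ t}).toReal)
    (c : EuclideanSpace ℝ (Fin d) → ℝ) (hc : Measurable c)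
    (hcval : ∀ x, c x = 1 ∨ c x = -1)
    (a b : ℝ) (ha : 0 < a) (hab : a ≤ b) (hb : b < 1)
    (n : ℕ) (hn : 0 < n)
    -- the constrained global optimizer h* = halfspace wS tS
    (wS : EuclideanSpace ℝ (Fin d)) (hwS : wS ≠ 0) (tS : ℝ)
    (hmassS : a ≤ (D {x | halfspace wS tS x = 1}).toReal ∧
      (D {x | halfspace wS tS x = 1}).toReal ≤ b)
    (hoptS : ∀ w : EuclideanSpace ℝ (Fin d), w ≠ 0 → ∀ t : ℝ,
      a ≤ (D {x | halfspace w t x = 1}).toReal →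
      (D {x | halfspace w t x = 1}).toReal ≤ b →
      unf D c (halfspace w t) ≤ unf D c (halfspace wS tS))
    (γS : ℝ) (hγS : γS = unf D c (halfspace wS tS))
    -- the per-grid-point optimizers h_k* = halfspace (wk k) (tk k)
    (wk : ℕ → EuclideanSpace ℝ (Fin d)) (tk : ℕ → ℝ)
    (hwk : ∀ k ≤ n, wk k ≠ 0)
    (hmassk : ∀ k ≤ n,
      (D {x | halfspace (wk k) (tk k) x = 1}).toReal = a + k * (b - a) / n)
    (hoptk : ∀ k ≤ n, ∀ w : EuclideanSpace ℝ (Fin d), w ≠ 0 → ∀ t : ℝ,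
      (D {x | halfspace w t x = 1}).toReal = a + k * (b - a) / n →
      unf D c (halfspace w t) ≤ unf D c (halfspace (wk k) (tk k))) :
    ∃ k ≤ n, unf D c (halfspace (wk k) (tk k)) ≥ γS - 2 * (b - a) / n := by
  obtain ⟨k, hk, hk1, hk2⟩ := aux_grid a b _ n hn hmassS.1 hmassS.2
  have hn' : (0 : ℝ) < n := by exact_mod_cast hn
  have hq : 0 ≤ (k : ℝ) * (b - a) / n :=
    div_nonneg (mul_nonneg (Nat.cast_nonneg _) (by linarith)) hn'.le
  obtain ⟨s, hs, hsm⟩ := aux_exists D wS (hcont wS hwS) tS (a + (k : ℝ) * (b - a) / n)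
    (by linarith) (by simpa only [aux_hs] using hk1)
  refine ⟨k, hk, ?_⟩
  have hsm' : (D {x | halfspace wS s x = 1}).toReal = a + (k : ℝ) * (b - a) / n := by
    simpa only [aux_hs] using hsm
  have hopt := hoptk k hk wS hwS s hsm'
  have hcS : MeasurableSet {x | c x = 1} := hc (measurableSet_singleton 1)
  have hhs : ∀ t, MeasurableSet {x | halfspace wS t x = 1} := by
    intro t
    simp only [aux_hs]
    exact measurableSet_le measurable_const (aux_meas wS)
  have hsub : {x | halfspace wS s x = 1} ⊆ {x | halfspace wS tS x = 1} := by
    intro x hx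
    simp only [aux_hs, Set.mem_ofPred_eq] at hx ⊢
    exact hs.trans hx
  have hC1 : (D {x | c x = 1 ∧ halfspace wS s x = 1}).toReal
      ≤ (D {x | c x = 1 ∧ halfspace wS tS x = 1}).toReal :=
    measureReal_mono (μ := D) (fun x hx => ⟨hx.1, hsub hx.2⟩)
  have hC2 : (D {x | c x = 1 ∧ halfspace wS tS x = 1}).toReal
      ≤ (D {x | c x = 1 ∧ halfspace wS s x = 1}).toReal
        + ((D {x | halfspace wS tS x = 1}).toReal - (D {x | halfspace wS s x = 1}).toReal) := by
    have h1 := measureReal_sdiff (μ := D) hsub (hhs s)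
    have h2 : D.real {x | c x = 1 ∧ halfspace wS tS x = 1}
        ≤ D.real ({x | c x = 1 ∧ halfspace wS s x = 1} ∪
          ({x | halfspace wS tS x = 1} \ {x | halfspace wS s x = 1})) := by
      refine measureReal_mono ?_ (measure_ne_top _ _)
      intro x hx
      by_cases h : halfspace wS s x = 1
      · exact Or.inl ⟨hx.1, h⟩
      · exact Or.inr ⟨hx.2, h⟩
    have h3 := h2.trans (measureReal_union_le _ _)
    rw [h1] at h3
    exact h3
  have hp0 : 0 ≤ (D {x | c x = 1}).toReal := ENNReal.toReal_nonneg
  have hp1 : (D {x | c x = 1}).toReal ≤ 1 := measureReal_le_one (μ := D)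
  rw [aux_unf D c _ (by rw [hsm']; linarith)] at hopt
  rw [aux_unf D c _ (by linarith [hmassS.1])] at hγS
  rw [← hsm'] at hk1 hk2
  generalize (D {x | c x = 1}).toReal = p at *
  generalize (D {x | halfspace wS s x = 1}).toReal = m at *
  generalize (D {x | halfspace wS tS x = 1}).toReal = M at *
  generalize (D {x | c x = 1 ∧ halfspace wS s x = 1}).toReal = u at *
  generalize (D {x | c x = 1 ∧ halfspace wS tS x = 1}).toReal = U at *
  have e1 : 0 ≤ (M - m) * p := mul_nonneg (by linarith) hp0
  have e2 : (M - m) * p ≤ M - m := mul_le_of_le_one_right (by linarith) hp1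
  have e3 := abs_sub_abs_le_abs_sub (M * p - U) (m * p - u)
  have e4 : |M * p - U - (m * p - u)| ≤ 2 * (M - m) := by
    rw [abs_le]; constructor <;> linarith
  have e5 : 2 * (b - a) / n = 2 * ((b - a) / n) := by ring
  rw [e5]
  linarith
end

section
/- Let D be a probability measure on ℝ^d, let c : ℝ^d → {−1,+1} be measurable, let μ ∈ (0,1], and let H_μ^D be a nonempty collection of halfspaces h with P_{x∼D}{h(x)=1} = μ. Let opt_min = inf_{h∈H_μ^D} P{c(x)=h(x)} and opt_max = sup_{h∈H_μ^D} P{c(x)=h(x)}, and suppose h* ∈ H_μ^D attains γ* = max_{h∈H_μ^D} μ·|d_D(c,h)|. If ε ≥ 0 and h_v, h_u ∈ H_μ^D satisfy P{c(x)=h_v(x)} ≤ opt_min + 2ε and P{c(x)=h_u(x)} ≥ opt_max − 2ε, then either μ·|d_D(c,h_v)| ≥ γ* − ε or μ·|d_D(c,h_u)| ≥ γ* − ε. -/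
open MeasureTheory
open scoped RealInnerProductSpace

theorem agree_aux {d : ℕ} (D : Measure (EuclideanSpace ℝ (Fin d))) [IsProbabilityMeasure D]
    (c : EuclideanSpace ℝ (Fin d) → ℝ) (hc : Measurable c)
    (hcval : ∀ x, c x = 1 ∨ c x = -1)
    (μ : ℝ) (hμ : 0 < μ) (w : EuclideanSpace ℝ (Fin d)) (t : ℝ)
    (hm : (D {x | halfspace w t x = 1}).toReal = μ) :
    (D {x | c x = halfspace w t x}).toReal =
      2 * μ * (D {x | c x = 1}).toReal - 2 * (μ * dev D c (halfspace w t)) + 1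
        - (D {x | c x = 1}).toReal - μ := by
  have hhval : ∀ x, halfspace w t x = 1 ∨ halfspace w t x = -1 := by
    intro x
    unfold halfspace
    split_ifs <;> simp
  have hhm : Measurable (halfspace w t) := by
    unfold halfspace
    refine Measurable.ite ?_ measurable_const measurable_const
    exact measurableSet_le measurable_const (by fun_prop)
  have hA : MeasurableSet {x | c x = 1} := hc (measurableSet_singleton 1)
  have hB : MeasurableSet {x | halfspace w t x = 1} := hhm (measurableSet_singleton 1)
  have hdev : μ * dev D c (halfspace w t) = μ * (D {x | c x = 1}).toReal -
      (D {x | c x = 1 ∧ halfspace w t x = 1}).toReal := by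
    unfold dev
    rw [hm]
    field_simp
  have hset : {x | c x = halfspace w t x} =
      ({x | c x = 1} ∩ {x | halfspace w t x = 1}) ∪
        ({x | c x = 1} ∪ {x | halfspace w t x = 1})ᶜ := by
    ext x
    rcases hcval x with h1 | h1 <;> rcases hhval x with h2 | h2 <;>
      simp [h1, h2] <;> norm_num
  have e1 : D.real {x | c x = halfspace w t x} =
      D.real ({x | c x = 1} ∩ {x | halfspace w t x = 1}) +
        D.real (({x | c x = 1} ∪ {x | halfspace w t x = 1})ᶜ) := by
    rw [hset]
    refine measureReal_union ?_ (hA.union hB).compl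
    rw [Set.disjoint_left]
    intro x hx hx'
    exact hx' (Or.inl hx.1)
  have e2 := probReal_compl_eq_one_sub (μ := D) (hA.union hB)
  have e3 := measureReal_union_add_inter (μ := D) (s := {x | c x = 1}) hB
  have e4 : (D {x | c x = 1 ∧ halfspace w t x = 1}).toReal =
    D.real ({x | c x = 1} ∩ {x | halfspace w t x = 1}) := rfl
  rw [hdev, e4]
  simp only [← measureReal_def] at hm ⊢
  linarith

/-- Lemma 3.5: near-optimal agnostic learners (near-minimal or near-maximal
agreement with `c` over the halfspaces of mass `μ`) yield a near-maximally
unfair subgroup. -/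
theorem stmt_5 {d : ℕ} (D : Measure (EuclideanSpace ℝ (Fin d))) [IsProbabilityMeasure D]
    (c : EuclideanSpace ℝ (Fin d) → ℝ) (hc : Measurable c)
    (hcval : ∀ x, c x = 1 ∨ c x = -1)
    (μ : ℝ) (hμ : 0 < μ) (hμ1 : μ ≤ 1)
    -- agreement values over H_μ^D
    (optmin optmax : ℝ)
    (hoptmin : optmin = sInf {r : ℝ | ∃ w : EuclideanSpace ℝ (Fin d), w ≠ 0 ∧ ∃ t : ℝ,
      (D {x | halfspace w t x = 1}).toReal = μ ∧
      r = (D {x | c x = halfspace w t x}).toReal})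
    (hoptmax : optmax = sSup {r : ℝ | ∃ w : EuclideanSpace ℝ (Fin d), w ≠ 0 ∧ ∃ t : ℝ,
      (D {x | halfspace w t x = 1}).toReal = μ ∧
      r = (D {x | c x = halfspace w t x}).toReal})
    -- h* ∈ H_μ^D attains the maximal weighted unfairness γ*
    (wS : EuclideanSpace ℝ (Fin d)) (hwS : wS ≠ 0) (tS : ℝ)
    (hmassS : (D {x | halfspace wS tS x = 1}).toReal = μ)
    (γS : ℝ) (hγS : γS = μ * |dev D c (halfspace wS tS)|)
    (hSopt : ∀ w : EuclideanSpace ℝ (Fin d), w ≠ 0 → ∀ t : ℝ,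
      (D {x | halfspace w t x = 1}).toReal = μ →
      μ * |dev D c (halfspace w t)| ≤ γS)
    (ε : ℝ) (hε : 0 ≤ ε)
    -- h_v, h_u ∈ H_μ^D near-minimizing resp. near-maximizing the agreement
    (wv : EuclideanSpace ℝ (Fin d)) (hwv : wv ≠ 0) (tv : ℝ)
    (hmassv : (D {x | halfspace wv tv x = 1}).toReal = μ)
    (wu : EuclideanSpace ℝ (Fin d)) (hwu : wu ≠ 0) (tu : ℝ)
    (hmassu : (D {x | halfspace wu tu x = 1}).toReal = μ)
    (hv : (D {x | c x = halfspace wv tv x}).toReal ≤ optmin + 2 * ε)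
    (hu : (D {x | c x = halfspace wu tu x}).toReal ≥ optmax - 2 * ε) :
    μ * |dev D c (halfspace wv tv)| ≥ γS - ε ∨
      μ * |dev D c (halfspace wu tu)| ≥ γS - ε := by
  have aS := agree_aux D c hc hcval μ hμ wS tS hmassS
  have av := agree_aux D c hc hcval μ hμ wv tv hmassv
  have au := agree_aux D c hc hcval μ hμ wu tu hmassu
  rcases le_total 0 (dev D c (halfspace wS tS)) with h | h
  · left
    have hle : optmin ≤ (D {x | c x = halfspace wS tS x}).toReal := by
      rw [hoptmin]
      refine csInf_le ⟨0, ?_⟩ ⟨wS, hwS, tS, hmassS, rfl⟩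
      rintro r ⟨w, -, t, -, rfl⟩
      exact ENNReal.toReal_nonneg
    rw [abs_of_nonneg h] at hγS
    have := mul_le_mul_of_nonneg_left (le_abs_self (dev D c (halfspace wv tv))) hμ.le
    linarith
  · right
    have hle : (D {x | c x = halfspace wS tS x}).toReal ≤ optmax := by
      rw [hoptmax]
      refine le_csSup ⟨1, ?_⟩ ⟨wS, hwS, tS, hmassS, rfl⟩
      rintro r ⟨w, -, t, -, rfl⟩
      exact measureReal_le_one
    rw [abs_of_nonpos h] at hγS
    have := mul_le_mul_of_nonneg_left (neg_abs_le (dev D c (halfspace wu tu))) hμ.le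
    linarith
end

section
/- Let D be a probability measure on ℝ^d and let c, g₁, g₂ : ℝ^d → {−1,+1} be measurable. Suppose that for D-almost every x at least one of g₁(x)=1 and g₂(x)=1 holds, let B = {x : g₁(x)=1 and g₂(x)=1}, and suppose P{g₁(x)=1} > 0, P{g₂(x)=1} > 0, and P{x ∈ B} > 0. Then P{g₁(x)=1}·d_D(c,g₁) + P{g₂(x)=1}·d_D(c,g₂) = P{x ∈ B}·( P{c(x)=1} − P{c(x)=1 | x ∈ B} ). -/
open MeasureTheory

/-- The identity `I₁ − I₂` in the proof of Theorem 4.2: for two subgroups that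
cover the space almost surely and overlap exactly on `B`,
`P{g₁=1}·d_D(c,g₁) + P{g₂=1}·d_D(c,g₂) = P{B}·(P{c=1} − P{c=1 | B})`. -/
theorem stmt_7 {d : ℕ} (D : Measure (EuclideanSpace ℝ (Fin d))) [IsProbabilityMeasure D]
    (c g₁ g₂ : EuclideanSpace ℝ (Fin d) → ℝ)
    (hc : Measurable c) (hg₁ : Measurable g₁) (hg₂ : Measurable g₂)
    (hcval : ∀ x, c x = 1 ∨ c x = -1)
    (hg₁val : ∀ x, g₁ x = 1 ∨ g₁ x = -1) (hg₂val : ∀ x, g₂ x = 1 ∨ g₂ x = -1)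
    (hcover : ∀ᵐ x ∂D, g₁ x = 1 ∨ g₂ x = 1)
    (B : Set (EuclideanSpace ℝ (Fin d)))
    (hB : B = {x | g₁ x = 1 ∧ g₂ x = 1})
    (hg₁pos : 0 < D {x | g₁ x = 1}) (hg₂pos : 0 < D {x | g₂ x = 1})
    (hBpos : 0 < D B) :
    (D {x | g₁ x = 1}).toReal * dev D c g₁ +
        (D {x | g₂ x = 1}).toReal * dev D c g₂ =
      (D B).toReal *
        ((D {x | c x = 1}).toReal -
          (D ({x | c x = 1} ∩ B)).toReal / (D B).toReal) := by
  subst hB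
  have m1 : MeasurableSet {x | g₁ x = 1} := hg₁ (measurableSet_singleton 1)
  have m2 : MeasurableSet {x | g₂ x = 1} := hg₂ (measurableSet_singleton 1)
  have mc : MeasurableSet {x | c x = 1} := hc (measurableSet_singleton 1)
  have e1 := measureReal_union_add_inter (μ := D) (s := {x | g₁ x = 1}) m2
  have e2 := measureReal_union_add_inter (μ := D)
    (s := {x | c x = 1 ∧ g₁ x = 1}) (t := {x | c x = 1 ∧ g₂ x = 1}) (mc.inter m2)
  have u1 : D.real ({x | g₁ x = 1} ∪ {x | g₂ x = 1}) = 1 := by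
    have h : D ({x | g₁ x = 1} ∪ {x | g₂ x = 1}) = D Set.univ := by
      apply measure_congr
      filter_upwards [hcover] with x hx
      exact propext ⟨fun _ => trivial, fun _ => hx⟩
    simp [Measure.real, h]
  have u2 : D.real ({x | c x = 1 ∧ g₁ x = 1} ∪ {x | c x = 1 ∧ g₂ x = 1})
      = D.real {x | c x = 1} := by
    have h : D ({x | c x = 1 ∧ g₁ x = 1} ∪ {x | c x = 1 ∧ g₂ x = 1})
        = D {x | c x = 1} := by
      apply measure_congr
      filter_upwards [hcover] with x hx
      refine propext ⟨fun h => ?_, fun h => ?_⟩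
      · exact h.elim (fun h => h.1) (fun h => h.1)
      · exact hx.elim (fun h' => Or.inl ⟨h, h'⟩) (fun h' => Or.inr ⟨h, h'⟩)
    simp [Measure.real, h]
  have i1 : {x | g₁ x = 1} ∩ {x | g₂ x = 1} = {x | g₁ x = 1 ∧ g₂ x = 1} := rfl
  have i2 : {x | c x = 1 ∧ g₁ x = 1} ∩ {x | c x = 1 ∧ g₂ x = 1}
      = {x | c x = 1} ∩ {x | g₁ x = 1 ∧ g₂ x = 1} := by
    ext x
    simp only [Set.mem_inter_iff, Set.mem_setOf_eq]
    tauto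
  rw [u1, i1] at e1
  rw [u2, i2] at e2
  have p1 := (ENNReal.toReal_pos hg₁pos.ne' (measure_ne_top D _)).ne'
  have p2 := (ENNReal.toReal_pos hg₂pos.ne' (measure_ne_top D _)).ne'
  have p3 := (ENNReal.toReal_pos hBpos.ne' (measure_ne_top D _)).ne'
  simp only [Measure.real] at e1 e2
  unfold dev
  rw [mul_sub, mul_sub, mul_sub, mul_div_cancel₀ _ p1, mul_div_cancel₀ _ p2,
    mul_div_cancel₀ _ p3]
  linear_combination (-(D {x | c x = 1}).toReal) * e1 + e2
end

section
/- Let d ≥ 1, let s ∈ ℝ^d with ‖s‖₂ = 1, let σ > 0 and T > 0, let x ∼ N(0, I_d) and z ∼ N(0, σ²) be independent, and define Y = +1 if mod_T(sᵀx + z) ≤ T/2 and Y = −1 otherwise. Define the halfspaces h₁(x) = +1 iff sᵀx ≥ T/6 and h₂(x) = +1 iff sᵀx ≤ T/3, and let B = {x : sᵀx ∈ [T/6, T/3]}. Then max( P{h₁(x)=1}·|d(Y,h₁)|, P{h₂(x)=1}·|d(Y,h₂)| ) ≥ (1/2)·P{x ∈ B}·( 1/2 − P{|z| ≥ T/6}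 ), where d(Y,h) = P{Y=1} − P{Y=1 | h(x)=1}. -/
open MeasureTheory ProbabilityTheory
open scoped RealInnerProductSpace

/-- `modT T w` is the unique representative of `w` modulo `T` lying in `[0, T)`
(for `T > 0`). -/
noncomputable def modT (T w : ℝ) : ℝ := w - T * ⌊w / T⌋

/-- The standard Gaussian measure `N(0, I_d)` on `ℝ^d`. -/
noncomputable def stdGaussian (d : ℕ) : Measure (EuclideanSpace ℝ (Fin d)) :=
  Measure.map (EuclideanSpace.equiv (Fin d) ℝ).symm
    (Measure.pi fun _ : Fin d => gaussianReal 0 1)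

/-- For a joint distribution `P`, label event `E` (i.e. `{Y = 1}`) and subgroup
event `H` (i.e. `{h(x) = 1}`), the weighted unfairness
`P{H}·|P{Y=1} − P{Y=1 | H}|`. -/
noncomputable def wUnf {Ω : Type*} [MeasurableSpace Ω] (P : Measure Ω)
    (E H : Set Ω) : ℝ :=
  (P H).toReal * |(P E).toReal - (P (E ∩ H)).toReal / (P H).toReal|


lemma modT_meas (T : ℝ) : Measurable (modT T) := by
  unfold modT
  fun_prop

lemma modT_both {T w : ℝ} (hT : 0 < T) (h1 : modT T w ≤ T / 2) (h2 : modT T (-w) ≤ T / 2) :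
    ∃ n : ℤ, w = T / 2 * n := by
  unfold modT at h1 h2
  have a1 := Int.floor_le (w / T)
  have a2 := Int.lt_floor_add_one (w / T)
  have b1 := Int.floor_le (-w / T)
  have b2 := Int.lt_floor_add_one (-w / T)
  rw [le_div_iff₀ hT] at a1 b1
  rw [div_lt_iff₀ hT] at a2 b2
  generalize ⌊w / T⌋ = n at *
  generalize ⌊-w / T⌋ = m at *
  have h3 : n + m ≤ 0 := by
    have : ((n + m : ℤ) : ℝ) ≤ 0 := by push_cast; nlinarith
    exact_mod_cast this
  have h4 : -2 < n + m := by
    have : ((-2 : ℤ) : ℝ) < ((n + m : ℤ) : ℝ) := by push_cast; nlinarith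
    exact_mod_cast this
  have h5 : m = -n ∨ m = -n - 1 := by omega
  rcases h5 with h5 | h5
  · refine ⟨2 * n, ?_⟩
    subst h5
    push_cast at *
    nlinarith
  · refine ⟨2 * n + 1, ?_⟩
    subst h5
    push_cast at *
    nlinarith

lemma wUnf_eq {Ω : Type*} [MeasurableSpace Ω] (P : Measure Ω) [IsProbabilityMeasure P]
    (E H : Set Ω) : wUnf P E H = |P.real E * P.real H - P.real (E ∩ H)| := by
  unfold wUnf
  change P.real H * |P.real E - P.real (E ∩ H) / P.real H| = _
  rcases eq_or_ne (P.real H) 0 with h | h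
  · have : P.real (E ∩ H) = 0 :=
      le_antisymm (h ▸ measureReal_mono Set.inter_subset_right) measureReal_nonneg
    simp [h, this]
  · rw [← abs_of_nonneg (measureReal_nonneg (μ := P) (s := H)), ← abs_mul,
      abs_of_nonneg (measureReal_nonneg (μ := P) (s := H))]
    congr 1
    field_simp

lemma main_aux {V : Type*} [MeasurableSpace V] [Neg V] (μ : Measure V) [IsProbabilityMeasure μ]
    (ν : Measure ℝ) [IsProbabilityMeasure ν] [NullSingletonClass ν]
    (hμ : MeasurePreserving (fun x : V => -x) μ μ) (hν : MeasurePreserving (fun x : ℝ => -x) ν ν)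
    (f : V → ℝ) (hf : Measurable f) (hodd : ∀ x, f (-x) = - f x) (T : ℝ) (hT : 0 < T) :
    max (wUnf (μ.prod ν) {p : V × ℝ | modT T (f p.1 + p.2) ≤ T / 2} {p : V × ℝ | T / 6 ≤ f p.1})
      (wUnf (μ.prod ν) {p : V × ℝ | modT T (f p.1 + p.2) ≤ T / 2} {p : V × ℝ | f p.1 ≤ T / 3}) ≥
    (1 / 2) * (μ {x | f x ∈ Set.Icc (T / 6) (T / 3)}).toReal *
      (1 / 2 - (ν {z : ℝ | T / 6 ≤ |z|}).toReal) := by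
  set E := {p : V × ℝ | modT T (f p.1 + p.2) ≤ T / 2} with hE
  set H₁ := {p : V × ℝ | T / 6 ≤ f p.1} with hH₁
  set H₂ := {p : V × ℝ | f p.1 ≤ T / 3} with hH₂
  set B := {x | f x ∈ Set.Icc (T / 6) (T / 3)} with hB
  set Z := {z : ℝ | T / 6 ≤ |z|} with hZ
  set P := μ.prod ν with hP
  change _ ≥ (1 / 2) * μ.real B * (1 / 2 - ν.real Z)
  have mw : Measurable (fun p : V × ℝ => f p.1 + p.2) := by fun_prop
  have mE : MeasurableSet E := measurableSet_le ((modT_meas T).comp mw) measurable_const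
  have mH₁ : MeasurableSet H₁ := measurableSet_le measurable_const (by fun_prop)
  have mH₂ : MeasurableSet H₂ := measurableSet_le (by fun_prop) measurable_const
  have mZ : MeasurableSet Z := measurableSet_le measurable_const (by fun_prop)
  have hN : MeasurePreserving (Prod.map (fun x : V => -x) (fun x : ℝ => -x)) P P := hμ.prod hν
  -- label probability at most one half
  have hhalf : P.real E ≤ 1 / 2 := by
    set E' := Prod.map (fun x : V => -x) (fun x : ℝ => -x) ⁻¹' E with hE'
    have mE' : MeasurableSet E' := hN.measurable mE
    have e1 : P.real E' = P.real E := by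
      simp only [measureReal_def, hE', hN.measure_preimage mE.nullMeasurableSet]
    have hsub : E ∩ E' ⊆ {p : V × ℝ | ∃ n : ℤ, f p.1 + p.2 = T / 2 * n} := by
      rintro ⟨x, z⟩ ⟨h1, h2⟩
      simp only [hE, hE', Set.mem_preimage, Set.mem_ofPred_eq, Prod.map, hodd] at h1 h2
      refine modT_both hT h1 ?_
      rwa [neg_add]
    have hnull : P (E ∩ E') = 0 := by
      rw [Measure.measure_prod_null (mE.inter mE')]
      refine Filter.Eventually.of_forall fun x => ?_
      refine measure_mono_null (t := Set.range (fun n : ℤ => T / 2 * n - f x)) ?_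
        ((Set.countable_range _).measure_zero ν)
      intro z hz
      obtain ⟨n, hn⟩ := hsub hz
      exact ⟨n, by simp only at hn ⊢; linarith⟩
    have e2 := measureReal_union_add_inter (μ := P) (s := E) mE'
    have e3 : P.real (E ∩ E') = 0 := by simp [measureReal_def, hnull]
    have e4 : P.real (E ∪ E') ≤ 1 := measureReal_le_one
    linarith
  have hB12 : H₁ ∩ H₂ = B ×ˢ Set.univ := by
    ext ⟨x, z⟩; simp [hH₁, hH₂, hB]
  have hU : H₁ ∪ H₂ = Set.univ := by
    ext ⟨x, z⟩
    simp only [hH₁, hH₂, Set.mem_union, Set.mem_ofPred_eq, Set.mem_univ, iff_true]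
    rcases le_total (T / 6) (f x) with h | h
    · exact Or.inl h
    · right; linarith
  have c1 := measureReal_union_add_inter (μ := P) (s := H₁) mH₂
  have c2 := measureReal_union_add_inter (μ := P) (s := E ∩ H₁) (mE.inter mH₂)
  rw [← Set.inter_union_distrib_left, ← Set.inter_inter_distrib_left, hU, Set.inter_univ] at c2
  rw [hU] at c1
  have c3 : P.real (H₁ ∩ H₂) = μ.real B := by
    rw [hB12, hP, measureReal_prod_prod]; simp
  have c4 : μ.real B * (1 - ν.real Z) ≤ P.real (E ∩ (H₁ ∩ H₂)) := by
    rw [← probReal_compl_eq_one_sub mZ, ← measureReal_prod_prod]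
    refine measureReal_mono ?_ (measure_ne_top P _)
    rintro ⟨x, z⟩ ⟨hx, hz⟩
    refine ⟨?_, hx.1, hx.2⟩
    simp only [hZ, Set.mem_compl_iff, Set.mem_ofPred_eq, not_le, abs_lt] at hz
    simp only [hB, Set.mem_ofPred_eq, Set.mem_Icc] at hx
    have : ⌊(f x + z) / T⌋ = 0 := by
      rw [Int.floor_eq_zero_iff]
      constructor
      · apply div_nonneg <;> linarith
      · rw [div_lt_one hT]; linarith
    simp only [hE, Set.mem_ofPred_eq, modT, this]
    push_cast
    linarith
  have c5 : P.real Set.univ = 1 := probReal_univ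
  rw [wUnf_eq, wUnf_eq]
  have m1 := le_max_left |P.real E * P.real H₁ - P.real (E ∩ H₁)|
    |P.real E * P.real H₂ - P.real (E ∩ H₂)|
  have m2 := le_max_right |P.real E * P.real H₁ - P.real (E ∩ H₁)|
    |P.real E * P.real H₂ - P.real (E ∩ H₂)|
  have n1 := neg_abs_le (P.real E * P.real H₁ - P.real (E ∩ H₁))
  have n2 := neg_abs_le (P.real E * P.real H₂ - P.real (E ∩ H₂))
  have k : P.real E * (P.real H₁ + P.real H₂) = P.real E * (1 + μ.real B) := by
    rw [← c1, c5, c3]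
  have k2 : P.real E * μ.real B ≤ 1 / 2 * μ.real B :=
    mul_le_mul_of_nonneg_right hhalf measureReal_nonneg
  linarith

lemma std_neg (d : ℕ) : MeasurePreserving (fun x => -x) (stdGaussian d) (stdGaussian d) := by
  have h0 : MeasurePreserving (fun x : ℝ => -x) (gaussianReal 0 1) (gaussianReal 0 1) :=
    ⟨measurable_neg, by rw [gaussianReal_map_neg]; simp⟩
  have h1 := measurePreserving_pi (fun _ : Fin d => gaussianReal 0 1)
    (fun _ : Fin d => gaussianReal 0 1) (fun _ => h0)
  refine ⟨measurable_neg, ?_⟩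
  have me : Measurable (EuclideanSpace.equiv (Fin d) ℝ).symm :=
    (EuclideanSpace.equiv (Fin d) ℝ).symm.continuous.measurable
  unfold _root_.stdGaussian
  rw [Measure.map_map measurable_neg me]
  conv_rhs => rw [← h1.map_eq]
  rw [Measure.map_map me h1.measurable]
  rfl

lemma gauss_aux (d : ℕ) (s : EuclideanSpace ℝ (Fin d)) (v : NNReal) (hv : v ≠ 0)
    (T : ℝ) (hT : 0 < T) :
    max
      (wUnf ((stdGaussian d).prod (gaussianReal 0 v))
        {p : EuclideanSpace ℝ (Fin d) × ℝ | modT T (⟪s, p.1⟫ + p.2) ≤ T / 2}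
        {p : EuclideanSpace ℝ (Fin d) × ℝ | T / 6 ≤ ⟪s, p.1⟫})
      (wUnf ((stdGaussian d).prod (gaussianReal 0 v))
        {p : EuclideanSpace ℝ (Fin d) × ℝ | modT T (⟪s, p.1⟫ + p.2) ≤ T / 2}
        {p : EuclideanSpace ℝ (Fin d) × ℝ | ⟪s, p.1⟫ ≤ T / 3}) ≥
    (1 / 2) * (stdGaussian d {x | ⟪s, x⟫ ∈ Set.Icc (T / 6) (T / 3)}).toReal *
      (1 / 2 - (gaussianReal 0 v {z : ℝ | T / 6 ≤ |z|}).toReal) := by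
  have : IsProbabilityMeasure (stdGaussian d) :=
    Measure.isProbabilityMeasure_map
      (EuclideanSpace.equiv (Fin d) ℝ).symm.continuous.measurable.aemeasurable
  have := nullSingletonClass_gaussianReal (μ := 0) hv
  exact main_aux (stdGaussian d) _ (std_neg d)
    ⟨measurable_neg, by rw [gaussianReal_map_neg]; simp⟩ (fun x => ⟪s, x⟫) (by fun_prop)
    (fun x => by simp) T hT

/-- The alternative-hypothesis case in the proof of Theorem 4.2: under the LWE
alternative distribution, one of the two halfspaces `h₁(x) = sign(sᵀx − T/6)`,
`h₂(x) = sign(T/3 − sᵀx)` has weighted unfairness at least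
`(1/2)·P{B}·(1/2 − P{|z| ≥ T/6})`, where `B = {x : sᵀx ∈ [T/6, T/3]}`. -/
theorem stmt_12 (d : ℕ) (hd : 1 ≤ d) (s : EuclideanSpace ℝ (Fin d)) (hs : ‖s‖ = 1)
    (σ : ℝ) (hσ : 0 < σ) (T : ℝ) (hT : 0 < T) :
    max
      (wUnf ((stdGaussian d).prod (gaussianReal 0 ⟨σ ^ 2, sq_nonneg σ⟩))
        {p : EuclideanSpace ℝ (Fin d) × ℝ | modT T (⟪s, p.1⟫ + p.2) ≤ T / 2}
        {p : EuclideanSpace ℝ (Fin d) × ℝ | T / 6 ≤ ⟪s, p.1⟫})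
      (wUnf ((stdGaussian d).prod (gaussianReal 0 ⟨σ ^ 2, sq_nonneg σ⟩))
        {p : EuclideanSpace ℝ (Fin d) × ℝ | modT T (⟪s, p.1⟫ + p.2) ≤ T / 2}
        {p : EuclideanSpace ℝ (Fin d) × ℝ | ⟪s, p.1⟫ ≤ T / 3}) ≥
    (1 / 2) * (stdGaussian d {x | ⟪s, x⟫ ∈ Set.Icc (T / 6) (T / 3)}).toReal *
      (1 / 2 - (gaussianReal 0 ⟨σ ^ 2, sq_nonneg σ⟩ {z : ℝ | T / 6 ≤ |z|}).toReal) := by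
  have hv : (⟨σ ^ 2, sq_nonneg σ⟩ : NNReal) ≠ 0 := by
    intro h
    have := congrArg NNReal.toReal h
    change σ ^ 2 = 0 at this
    exact (pow_pos hσ 2).ne' this
  exact gauss_aux d s _ hv T hT
end
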